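/- Let A be a reduced Noetherian one-dimensional commutative ring whose integral closure B in Q(A) is a finite A-module. Then the blow up of Spec A in the conductor ideal C = A :_{Q(A)} B coincides with the normalization Spec B; that is, Proj_A(⊕_{i≥0} C^i) ≅ Spec B over Spec A. -/

import Mathlib

set_option synthInstance.maxHeartbeats 1000000
set_option maxHeartbeats 1000000

open Polynomial AlgebraicGeometry CategoryTheory

universe u

/-- The conductor of an intermediate extension `A ⊆ B ⊆ K`: the ideal of `A` consisting of
the elements `a` such that `a·B ⊆ A` (inside `K`). -/
def conductorIdeal (A : Type*) [CommRing A] (K : Type*) [CommRing K] [Algebra A K]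
    (B : Subalgebra A K) : Ideal A where
  carrier := { a | ∀ b ∈ B, ∃ c : A, algebraMap A K c = algebraMap A K a * b }
  add_mem' := by
    rintro x y hx hy b hb
    obtain ⟨c, hc⟩ := hx b hb
    obtain ⟨d, hd⟩ := hy b hb
    exact ⟨c + d, by rw [map_add, map_add, hc, hd, add_mul]⟩
  zero_mem' := fun b _ => ⟨0, by simp⟩
  smul_mem' := by
    rintro r x hx b hb
    obtain ⟨c, hc⟩ := hx b hb
    exact ⟨r * c, by rw [smul_eq_mul, map_mul, map_mul, hc, mul_assoc]⟩

/-!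
The conductor `C` is an ideal of `B` containing a regular element, and `B` is Noetherian, integrally
closed in `Q(A)` and of dimension at most one, so `C` is invertible: `C * C⁻¹ = B`. Hence `Spec B`
is covered by the basic open sets `D(β)` with `β = k * c`, `c ∈ C` and `k ∈ C⁻¹`. As `C` is an ideal
of `B`, every chart of the blow up given by an element of positive degree is a `B`-algebra, whence
a morphism from the blow up to `Spec B`. Over `D(β)` it is the chart of the degree-one element
`g = β * c`: there `β` is inverted by `c / g`, and `k * g = β ^ 2` shows that a fraction `s / g ^ n`
is `k ^ n * s / β ^ (2 * n)` with numerator in `B`.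
-/

theorem krullDimLE_of_isIntegral (A : Type*) {B : Type*} [CommRing A] [CommRing B] [Algebra A B]
    [Algebra.IsIntegral A B] (n : ℕ) [Ring.KrullDimLE n A] : Ring.KrullDimLE n B :=
  Order.krullDimLE_iff _ _ |>.mpr <|
    (Order.krullDim_le_of_strictMono (PrimeSpectrum.comap (algebraMap A B)) fun _ _ hpq ↦
      Ideal.IsIntegral.comap_lt_comap hpq).trans (Order.krullDimLE_iff _ _ |>.mp ‹_›)

section Invertibility

variable {B : Type*} [CommRing B]

theorem mem_minimalPrimes_span_singleton [Ring.KrullDimLE 1 B] {p : Ideal B} [hp : p.IsPrime]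
    {a : B} (ha : a ∈ nonZeroDivisors B) (hap : a ∈ p) :
    p ∈ (Ideal.span {a}).minimalPrimes := by
  refine ⟨⟨hp, (Ideal.span_singleton_le_iff_mem p).mpr hap⟩, fun q ⟨hq, haq⟩ hqp ↦ ?_⟩
  have haq : a ∈ q := (Ideal.span_singleton_le_iff_mem q).mp haq
  rcases Ring.krullDimLE_one_iff.mp ‹_› q hq with hmin | hmax
  · exact absurd ha (notMem_nonZeroDivisors_of_mem_mem_minimalPrimes haq hmin)
  · exact (hmax.eq_of_le hp.ne_top hqp).ge

theorem exists_mem_iff_dvd_mul [IsNoetherianRing B] [Ring.KrullDimLE 1 B] {p : Ideal B}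
    [p.IsPrime] {a : B} (ha : a ∈ nonZeroDivisors B) (hap : a ∈ p) :
    ∃ y, ∀ z, z ∈ p ↔ a ∣ z * y := by
  have hass : p ∈ associatedPrimes B (B ⧸ Ideal.span {a}) := by
    apply Module.associatedPrimes.minimalPrimes_annihilator_subset_associatedPrimes
    rw [Ideal.annihilator_quotient]
    exact mem_minimalPrimes_span_singleton ha hap
  obtain ⟨-, y', hy'⟩ := isAssociatedPrime_iff.mp hass
  obtain ⟨y, rfl⟩ := Ideal.Quotient.mk_surjective y'
  refine ⟨y, fun z ↦ ?_⟩
  rw [hy', Submodule.mem_colon_singleton, Submodule.mem_bot, Algebra.smul_def,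
    Ideal.Quotient.algebraMap_eq, ← map_mul, Ideal.Quotient.eq_zero_iff_dvd]

variable {K : Type*} [CommRing K] [Algebra B K]

theorem isIntegral_of_mul_mem_submodule {N : Submodule B K} [IsNoetherian B N] (h1 : 1 ∈ N)
    {q : K} (hq : ∀ d ∈ N, q * d ∈ N) : IsIntegral B q := by
  have hle : Subalgebra.toSubmodule (Algebra.adjoin B {q}) ≤ N := by
    rw [Algebra.adjoin_eq_span, Submodule.span_le]
    intro x hx
    induction hx using Submonoid.closure_induction_left with
    | one => exact h1
    | mul_left y hy x _ ih => exact Set.mem_singleton_iff.mp hy ▸ hq _ ih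
  exact isIntegral_of_submodule_noetherian _ (isNoetherian_of_le hle) q
    (Algebra.self_mem_adjoin_singleton B q)

theorem isNoetherian_one_div [IsNoetherianRing B] {M : Submodule B K} {u : K} (hu : IsUnit u)
    (huM : u ∈ M) : IsNoetherian B ↥(1 / M) := by
  obtain ⟨v, hvu⟩ := hu.exists_left_inv
  have := isNoetherian_span_of_finite B (Set.finite_singleton v)
  refine isNoetherian_of_le (t := Submodule.span B {v}) fun d hd ↦ ?_
  obtain ⟨b, hb⟩ := Submodule.mem_one.mp (Submodule.mem_div_iff_forall_mul_mem.mp hd u huM)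
  refine Submodule.mem_span_singleton.mpr ⟨b, ?_⟩
  rw [Algebra.smul_def]
  linear_combination v * hb + d * hvu

-- If `M * (1 / M)` met `B` inside `p`, the fraction `y / a` with `p = (a) : y` would multiply it
-- into `B`, hence stabilize `1 / M`; being integral, `y / a` would lie in `B`, so `1 ∈ p`.
theorem exists_notMem_algebraMap_mem_mul_one_div [IsNoetherianRing B] [Ring.KrullDimLE 1 B]
    [IsIntegrallyClosedIn B K] {M : Submodule B K} (hM : M ≤ 1) {u : K} (hu : IsUnit u)
    (huM : u ∈ M) (p : Ideal B) [hp : p.IsPrime] :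
    ∃ t ∉ p, algebraMap B K t ∈ M * (1 / M) := by
  by_contra! hMp
  have hinj : Function.Injective (algebraMap B K) := IsIntegralClosure.algebraMap_injective B B K
  have h1 : (1 : K) ∈ 1 / M := Submodule.one_mem_div.mpr hM
  obtain ⟨a, rfl⟩ := Submodule.mem_one.mp (hM huM)
  have hap : a ∈ p := by
    contrapose! hMp
    exact ⟨a, hMp, mul_one (algebraMap B K a) ▸ Submodule.mul_mem_mul huM h1⟩
  obtain ⟨y, hy⟩ := exists_mem_iff_dvd_mul
    (mem_nonZeroDivisors_of_injective hinj hu.mem_nonZeroDivisors) hap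
  obtain ⟨v, hva⟩ := hu.exists_left_inv
  have hstab : ∀ d ∈ 1 / M, v * algebraMap B K y * d ∈ 1 / M := fun d hd ↦ by
    refine Submodule.mem_div_iff_forall_mul_mem.mpr fun x hx ↦ ?_
    obtain ⟨t, ht⟩ := Submodule.mem_one.mp (Submodule.mem_div_iff_forall_mul_mem.mp hd x hx)
    have htp : t ∈ p := by
      contrapose! hMp
      exact ⟨t, hMp, ht ▸ mul_comm x d ▸ Submodule.mul_mem_mul hx hd⟩
    obtain ⟨w, hw⟩ := (hy t).mp htp
    have hw := congrArg (algebraMap B K) hw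
    rw [map_mul, map_mul] at hw
    refine Submodule.mem_one.mpr ⟨w, ?_⟩
    linear_combination -algebraMap B K w * hva - v * hw + v * algebraMap B K y * ht
  have := isNoetherian_one_div hu huM
  obtain ⟨w, hw⟩ := IsIntegrallyClosedIn.algebraMap_eq_of_integral
    (isIntegral_of_mul_mem_submodule h1 hstab)
  refine hp.ne_top ((Ideal.eq_top_iff_one p).mpr ((hy 1).mpr ⟨w, hinj ?_⟩))
  rw [map_mul, map_mul, map_one]
  linear_combination -algebraMap B K a * hw - algebraMap B K y * hva

theorem mul_one_div_eq_one_of_le_one [IsNoetherianRing B] [Ring.KrullDimLE 1 B]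
    [IsIntegrallyClosedIn B K] {M : Submodule B K} (hM : M ≤ 1) {u : K} (hu : IsUnit u)
    (huM : u ∈ M) : M * (1 / M) = 1 := by
  let P : Ideal B := (M * (1 / M)).comap (Algebra.linearMap B K)
  suffices hP : P = ⊤ by
    refine le_antisymm Submodule.mul_one_div_le_one ?_
    rw [Submodule.one_le, ← map_one (algebraMap B K)]
    exact (Ideal.eq_top_iff_one P).mp hP
  by_contra hP
  obtain ⟨m, hm, hPm⟩ := Ideal.exists_le_maximal P hP
  obtain ⟨t, htm, ht⟩ := exists_notMem_algebraMap_mem_mul_one_div hM hu huM m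
  exact htm (hPm ht)

end Invertibility

section Conductor

variable {A K : Type*} [CommRing A] [CommRing K] [Algebra A K] (B : Subalgebra A K)

/-- The conductor of `A ⊆ B` as an ideal of `B`, embedded into `K`. -/
def conductorSubmodule : Submodule B K where
  __ := IsLocalization.coeSubmodule K (conductorIdeal A K B)
  smul_mem' := by
    rintro b _ ⟨a, ha, rfl⟩
    obtain ⟨c, hc⟩ := ha b b.2
    refine ⟨c, fun b' hb' ↦ ?_, hc.trans (mul_comm _ _)⟩
    obtain ⟨e, he⟩ := ha (b * b') (mul_mem b.2 hb')
    exact ⟨e, by rw [he, hc, mul_assoc]⟩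

theorem restrictScalars_conductorSubmodule :
    (conductorSubmodule B).restrictScalars A =
      IsLocalization.coeSubmodule K (conductorIdeal A K B) :=
  rfl

theorem conductorSubmodule_le_one : conductorSubmodule B ≤ 1 := by
  rintro _ ⟨a, -, rfl⟩
  exact Submodule.mem_one.mpr ⟨algebraMap A B a, rfl⟩

theorem exists_mem_conductorIdeal_mem_nonZeroDivisors [IsFractionRing A K] [Module.Finite A B] :
    ∃ a ∈ conductorIdeal A K B, a ∈ nonZeroDivisors A := by
  obtain ⟨a, ha, haB⟩ := FractionalIdeal.isFractional_of_fg (S := nonZeroDivisors A)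
    (I := B.toSubmodule) (Module.Finite.iff_fg.mp ‹Module.Finite A B.toSubmodule›)
  refine ⟨a, fun b hb ↦ ?_, ha⟩
  rw [← Algebra.smul_def]
  exact haB b hb

end Conductor

theorem exists_ringHom_comp_eq {R S T : Type*} [Ring R] [Ring S] [Ring T] {i : S →+* T}
    (hi : Function.Injective i) {f : R →+* T} (hf : f.range ≤ i.range) :
    ∃ g : R →+* S, i.comp g = f := by
  let E : S ≃+* i.range := RingEquiv.ofBijective i.rangeRestrict
    ⟨fun _ _ hxy ↦ hi (congrArg Subtype.val hxy), i.rangeRestrict_surjective⟩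
  refine ⟨(E.symm : i.range →+* S).comp (f.codRestrict i.range fun r ↦ hf ⟨r, rfl⟩),
    RingHom.ext fun r ↦ ?_⟩
  exact congrArg Subtype.val (E.apply_symm_apply _)

theorem localizationAwayMap_algebraMap {S K : Type*} [CommRing S] [CommRing K] (ρ : S →+* K)
    (f s : S) : Localization.awayMap ρ f (algebraMap S _ s) = algebraMap K _ (ρ s) :=
  IsLocalization.map_eq _ s

section EvalAway

open HomogeneousLocalization

variable {ι σ S K : Type*} [AddCommMonoid ι] [DecidableEq ι] [CommRing S] [CommRing K]
  [SetLike σ S] [AddSubgroupClass σ S] (𝒜 : ι → σ) [GradedRing 𝒜] (ρ : S →+* K)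

/-- Evaluation through `ρ` of the degree-zero fractions with powers of `f` as denominators; the
values lie in the localization of the target away from `ρ f`. -/
noncomputable def evalAway (f : S) : Away 𝒜 f →+* Localization.Away (ρ f) :=
  (Localization.awayMap ρ f).comp (algebraMap (Away 𝒜 f) (Localization.Away f))

variable {f g x : S} {d e : ι}

theorem evalAway_mk_mul_pow (hf : f ∈ 𝒜 d) (n : ℕ) (s : S) (hs : s ∈ 𝒜 (n • d)) :
    evalAway 𝒜 ρ f (Away.mk 𝒜 hf n s hs) * algebraMap K _ (ρ f) ^ n = algebraMap K _ (ρ s) := by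
  rw [← localizationAwayMap_algebraMap, ← localizationAwayMap_algebraMap, evalAway,
    RingHom.comp_apply, HomogeneousLocalization.algebraMap_apply, Away.val_mk, ← map_pow,
    ← map_mul, ← map_pow, Localization.mk_eq_mk']
  exact congrArg _ (IsLocalization.mk'_spec _ s (⟨f ^ n, _⟩ : Submonoid.powers f))

theorem evalAway_fromZeroRingHom (s : 𝒜 0) :
    evalAway 𝒜 ρ f (fromZeroRingHom 𝒜 _ s) = algebraMap K _ (ρ s) :=
  localizationAwayMap_algebraMap ρ f s

theorem evalAway_awayMap (hg : g ∈ 𝒜 e) (hx : x = f * g) {z : Away 𝒜 f} {k : K}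
    (hz : evalAway 𝒜 ρ f z = algebraMap K _ k) :
    evalAway 𝒜 ρ x (awayMap 𝒜 hg hx z) = algebraMap K _ k := by
  have hu : IsUnit (algebraMap K (Localization.Away (ρ x)) (ρ f)) :=
    isUnit_of_dvd_unit (map_dvd _ (map_dvd ρ ⟨g, hx⟩)) (IsLocalization.Away.algebraMap_isUnit _)
  have hcomp : (Localization.awayMap ρ x).comp
        (Localization.awayLift (algebraMap S (Localization.Away x)) f
          (isUnit_of_dvd_unit (map_dvd _ ⟨g, hx⟩) (IsLocalization.Away.algebraMap_isUnit x))) =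
      (Localization.awayLift (algebraMap K _) (ρ f) hu).comp (Localization.awayMap ρ f) := by
    refine IsLocalization.ringHom_ext (Submonoid.powers f) (RingHom.ext fun s ↦ ?_)
    simp only [RingHom.comp_apply, IsLocalization.Away.lift_eq, localizationAwayMap_algebraMap]
  calc evalAway 𝒜 ρ x (awayMap 𝒜 hg hx z)
      = Localization.awayLift (algebraMap K _) (ρ f) hu (evalAway 𝒜 ρ f z) := by
        rw [evalAway, RingHom.comp_apply, HomogeneousLocalization.algebraMap_apply, val_awayMap]
        exact RingHom.congr_fun hcomp z.val
    _ = algebraMap K _ k := by rw [hz, IsLocalization.Away.lift_eq]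

variable {ρ}

theorem evalAway_injective (hρ : ∀ i, Set.InjOn ρ (𝒜 i)) (hf : f ∈ 𝒜 d) :
    Function.Injective (evalAway 𝒜 ρ f) := by
  rw [injective_iff_map_eq_zero]
  intro z hz
  obtain ⟨n, s, hs, rfl⟩ := Away.mk_surjective 𝒜 hf z
  have h0 := evalAway_mk_mul_pow 𝒜 ρ hf n s hs
  rw [hz, zero_mul, eq_comm] at h0
  obtain ⟨⟨_, m, rfl⟩, hm⟩ := (IsLocalization.map_eq_zero_iff (Submonoid.powers (ρ f)) _ _).mp h0
  have hms : f ^ m * s = 0 :=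
    hρ _ (SetLike.mul_mem_graded (SetLike.pow_mem_graded m hf) hs) (zero_mem _) (by simpa using hm)
  apply val_injective
  rw [Away.val_mk, val_zero, Localization.mk_eq_mk', IsLocalization.mk'_eq_zero_iff]
  exact ⟨⟨f ^ m, m, rfl⟩, hms⟩

end EvalAway

section ReesEmbedding

open HomogeneousLocalization

variable {σ S K B : Type*} [CommRing S] [CommRing K] [CommRing B] [Algebra B K]
  [SetLike σ S]

/-- `IsReesEmbedding 𝒜 ρ M` says that `ρ` embeds each graded piece `𝒜 n` into the power `M ^ n` of
the `B`-submodule `M` of `K`, with image all of `M ^ n` as soon as `n ≠ 0`. In degree `0` the image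
may be smaller than `M ^ 0 = B`: the Rees algebra of an ideal `I` of a subring `A` of `B` has degree
zero part `A` even if `I` is an ideal of `B`. -/
structure IsReesEmbedding (𝒜 : ℕ → σ) (ρ : S →+* K) (M : Submodule B K) : Prop where
  injOn (n : ℕ) : Set.InjOn ρ (𝒜 n)
  mapsTo (n : ℕ) : Set.MapsTo ρ (𝒜 n) (M ^ n : Submodule B K)
  surjOn (n : ℕ) (hn : n ≠ 0) : Set.SurjOn ρ (𝒜 n) (M ^ n : Submodule B K)

namespace IsReesEmbedding

variable {𝒜 : ℕ → σ} {ρ : S →+* K} {M : Submodule B K} {f g x : S} {d e : ℕ}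

theorem exists_algebraMap_eq_pow_mul (h : IsReesEmbedding 𝒜 ρ M) {k : K} (hk : k ∈ 1 / M) {n : ℕ}
    {s : S} (hs : s ∈ 𝒜 n) : ∃ b : B, algebraMap B K b = k ^ n * ρ s := by
  have hle : (1 / M) ^ n * M ^ n ≤ 1 := by
    rw [← mul_pow, mul_comm]
    exact pow_le_one' Submodule.mul_one_div_le_one n
  exact Submodule.mem_one.mp (hle (Submodule.mul_mem_mul (Submodule.pow_mem_pow _ hk n)
    (h.mapsTo n hs)))

variable [AddSubgroupClass σ S] [GradedRing 𝒜]

theorem range_algebraMap_le_range_evalAway (h : IsReesEmbedding 𝒜 ρ M) (hd : 0 < d)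
    (hf : f ∈ 𝒜 d) :
    ((algebraMap K _).comp (algebraMap B K)).range ≤ (evalAway 𝒜 ρ f).range := by
  rintro _ ⟨b, rfl⟩
  obtain ⟨s, hs, hsb⟩ := h.surjOn d hd.ne' (Submodule.smul_mem _ b (h.mapsTo d hf))
  refine ⟨Away.mk 𝒜 hf 1 s (by rwa [one_smul]), ?_⟩
  apply (IsLocalization.Away.algebraMap_isUnit (ρ f)).mul_right_cancel
  rw [← pow_one (algebraMap K _ (ρ f)), evalAway_mk_mul_pow, hsb, Algebra.smul_def, map_mul,
    pow_one, RingHom.comp_apply]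

/-- The structure morphism of the chart `Away 𝒜 f` as a `B`-algebra: as `f` has positive degree,
`b * f` is again an element of the graded ring, and `b` is sent to the fraction `(b * f) / f`. -/
noncomputable def toAway (h : IsReesEmbedding 𝒜 ρ M) (hd : 0 < d) (hf : f ∈ 𝒜 d) :
    B →+* Away 𝒜 f :=
  (exists_ringHom_comp_eq (evalAway_injective 𝒜 h.injOn hf)
    (h.range_algebraMap_le_range_evalAway hd hf)).choose

theorem evalAway_toAway (h : IsReesEmbedding 𝒜 ρ M) (hd : 0 < d) (hf : f ∈ 𝒜 d) (b : B) :
    evalAway 𝒜 ρ f (h.toAway hd hf b) = algebraMap K _ (algebraMap B K b) :=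
  RingHom.congr_fun (exists_ringHom_comp_eq (evalAway_injective 𝒜 h.injOn hf)
    (h.range_algebraMap_le_range_evalAway hd hf)).choose_spec b

theorem awayMap_comp_toAway (h : IsReesEmbedding 𝒜 ρ M) (hd : 0 < d) (hf : f ∈ 𝒜 d) {k : ℕ}
    (hk : 0 < k) (hxk : x ∈ 𝒜 k) (hg : g ∈ 𝒜 e) (hx : x = f * g) :
    (awayMap 𝒜 hg hx).comp (h.toAway hd hf) = h.toAway hk hxk := by
  refine RingHom.ext fun b ↦ evalAway_injective 𝒜 h.injOn hxk ?_
  rw [h.evalAway_toAway, RingHom.comp_apply]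
  exact evalAway_awayMap 𝒜 ρ hg hx (h.evalAway_toAway hd hf b)

theorem toAway_eq_fromZeroRingHom (h : IsReesEmbedding 𝒜 ρ M) (hd : 0 < d) (hf : f ∈ 𝒜 d) {b : B}
    {s : 𝒜 0} (hs : ρ s = algebraMap B K b) :
    h.toAway hd hf b = fromZeroRingHom 𝒜 _ s := by
  apply evalAway_injective 𝒜 h.injOn hf
  rw [h.evalAway_toAway, evalAway_fromZeroRingHom, hs]

end IsReesEmbedding

/-- `IsReesChart 𝒜 ρ M β g` says that the basic open sets `D(β)` of `Spec B` and `D₊(g)` of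
`Proj 𝒜` correspond to each other: `g` is `β` times an element of degree one, and some element of
`M⁻¹ = 1 / M` multiplies `g` to `β ^ 2`. -/
structure IsReesChart (𝒜 : ℕ → σ) (ρ : S →+* K) (M : Submodule B K) (β : B) (g : S) : Prop where
  mem : g ∈ 𝒜 1
  exists_eq_mul : ∃ c ∈ 𝒜 1, ρ g = algebraMap B K β * ρ c
  exists_mul_eq_sq : ∃ k ∈ 1 / M, k * ρ g = algebraMap B K β ^ 2

namespace IsReesChart

variable [AddSubgroupClass σ S] {𝒜 : ℕ → σ} [GradedRing 𝒜] {ρ : S →+* K} {M : Submodule B K}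
  {β : B} {f g : S}

theorem isUnit_toAway (h : IsReesEmbedding 𝒜 ρ M) (hβ : IsReesChart 𝒜 ρ M β g) :
    IsUnit (h.toAway one_pos hβ.mem β) := by
  obtain ⟨c, hc, hgc⟩ := hβ.exists_eq_mul
  refine IsUnit.of_mul_eq_one (Away.mk 𝒜 hβ.mem 1 c (by rwa [one_smul]))
    (evalAway_injective 𝒜 h.injOn hβ.mem ?_)
  apply (IsLocalization.Away.algebraMap_isUnit (ρ g)).mul_right_cancel
  rw [map_mul, map_one, one_mul, h.evalAway_toAway, mul_assoc,
    ← pow_one (algebraMap K (Localization.Away (ρ g)) (ρ g)), evalAway_mk_mul_pow, pow_one, hgc,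
    map_mul]

theorem exists_mul_pow_eq (h : IsReesEmbedding 𝒜 ρ M) (hβ : IsReesChart 𝒜 ρ M β g)
    (z : Away 𝒜 g) : ∃ n b, z * h.toAway one_pos hβ.mem β ^ n = h.toAway one_pos hβ.mem b := by
  obtain ⟨k, hk, hkg⟩ := hβ.exists_mul_eq_sq
  obtain ⟨n, s, hs, rfl⟩ := Away.mk_surjective 𝒜 hβ.mem z
  obtain ⟨b, hb⟩ := h.exists_algebraMap_eq_pow_mul hk hs
  refine ⟨2 * n, b, evalAway_injective 𝒜 h.injOn hβ.mem ?_⟩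
  apply ((IsLocalization.Away.algebraMap_isUnit (ρ g)).pow n).mul_right_cancel
  rw [map_mul, map_pow, h.evalAway_toAway, h.evalAway_toAway, mul_right_comm, evalAway_mk_mul_pow,
    hb, pow_mul, ← map_pow, ← hkg]
  simp only [smul_eq_mul, mul_one, map_mul, map_pow]
  ring

theorem exists_pow_mul_eq_of_toAway_eq [FaithfulSMul B K] (h : IsReesEmbedding 𝒜 ρ M)
    (hβ : IsReesChart 𝒜 ρ M β g) {a b : B}
    (hab : h.toAway one_pos hβ.mem a = h.toAway one_pos hβ.mem b) :
    ∃ n, β ^ n * a = β ^ n * b := by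
  obtain ⟨k, -, hkg⟩ := hβ.exists_mul_eq_sq
  have hab := congrArg (evalAway 𝒜 ρ g) hab
  rw [h.evalAway_toAway, h.evalAway_toAway] at hab
  obtain ⟨⟨_, m, rfl⟩, hm⟩ := (IsLocalization.eq_iff_exists (Submonoid.powers (ρ g)) _).mp hab
  refine ⟨2 * m, FaithfulSMul.algebraMap_injective B K ?_⟩
  rw [map_mul, map_mul, map_pow, pow_mul, ← hkg, mul_pow, mul_assoc, mul_assoc]
  exact congrArg (k ^ m * ·) hm

theorem isLocalizationAway [FaithfulSMul B K] (h : IsReesEmbedding 𝒜 ρ M)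
    (hβ : IsReesChart 𝒜 ρ M β g) :
    letI := (h.toAway one_pos hβ.mem).toAlgebra
    IsLocalization.Away β (Away 𝒜 g) :=
  letI := (h.toAway one_pos hβ.mem).toAlgebra
  IsLocalization.Away.mk β (isUnit_toAway h hβ) (exists_mul_pow_eq h hβ) fun _ _ ↦
    exists_pow_mul_eq_of_toAway_eq h hβ

theorem basicOpen_toAway (h : IsReesEmbedding 𝒜 ρ M) (hβ : IsReesChart 𝒜 ρ M β g) {e : ℕ}
    (he : 0 < e) (hf : f ∈ 𝒜 e) :
    PrimeSpectrum.basicOpen (h.toAway he hf β) =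
      PrimeSpectrum.basicOpen (Away.isLocalizationElem hf hβ.mem) := by
  obtain ⟨c, hc, hgc⟩ := hβ.exists_eq_mul
  obtain ⟨k, hk, hkg⟩ := hβ.exists_mul_eq_sq
  obtain ⟨b, hb⟩ := h.exists_algebraMap_eq_pow_mul hk hf
  have hinj := evalAway_injective 𝒜 h.injOn hf
  have hcancel {y z : Localization.Away (ρ f)}
      (hyz : y * algebraMap K _ (ρ f) ^ 1 = z * algebraMap K _ (ρ f) ^ 1) : y = z :=
    ((IsLocalization.Away.algebraMap_isUnit (ρ f)).pow 1).mul_right_cancel hyz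
  have hmul : Away.isLocalizationElem hf hβ.mem = h.toAway he hf β ^ e *
      Away.mk 𝒜 hf 1 (c ^ e) (by simpa [mul_comm] using SetLike.pow_mem_graded e hc) := by
    refine hinj (hcancel ?_)
    rw [map_mul, mul_assoc, evalAway_mk_mul_pow, evalAway_mk_mul_pow, map_pow, map_pow, hgc,
      map_pow, h.evalAway_toAway, map_pow, map_pow, ← mul_pow, ← map_mul]
  have hsq : h.toAway he hf β ^ (2 * e) = h.toAway he hf b * Away.isLocalizationElem hf hβ.mem := by
    refine hinj (hcancel ?_)
    rw [map_mul, mul_assoc, evalAway_mk_mul_pow, map_pow, h.evalAway_toAway, h.evalAway_toAway,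
      hb, pow_mul, ← map_pow, ← hkg]
    simp only [map_mul, map_pow]
    ring
  apply le_antisymm
  · rw [← PrimeSpectrum.basicOpen_pow _ (2 * e) (by omega), hsq]
    exact PrimeSpectrum.basicOpen_mul_le_right _ _
  · rw [← PrimeSpectrum.basicOpen_pow (h.toAway he hf β) e he, hmul]
    exact PrimeSpectrum.basicOpen_mul_le_left _ _

end IsReesChart

theorem IsReesEmbedding.span_isReesChart_eq_top {𝒜 : ℕ → σ} {ρ : S →+* K} {M : Submodule B K}
    [FaithfulSMul B K] (h : IsReesEmbedding 𝒜 ρ M) (hM : M * (1 / M) = 1) :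
    Ideal.span {β : B | ∃ g, IsReesChart 𝒜 ρ M β g} = ⊤ := by
  set J := Ideal.span {β : B | ∃ g, IsReesChart 𝒜 ρ M β g}
  have hle : M * (1 / M) ≤ Submodule.map (Algebra.linearMap B K) J := by
    refine Submodule.mul_le.mpr fun m hm k hk ↦ ?_
    obtain ⟨β, hβ⟩ := Submodule.mem_one.mp (Submodule.mem_div_iff_forall_mul_mem.mp hk m hm)
    obtain ⟨c, hc, rfl⟩ := h.surjOn 1 one_ne_zero (by rwa [pow_one] : m ∈ M ^ 1)
    obtain ⟨g, hg, hgc⟩ := h.surjOn 1 one_ne_zero (Submodule.smul_mem _ β (h.mapsTo 1 hc))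
    rw [Algebra.smul_def] at hgc
    refine ⟨β, Ideal.subset_span ⟨g, hg, ⟨c, hc, hgc⟩, k, hk, ?_⟩, hβ.trans (mul_comm k _)⟩
    rw [hgc, mul_left_comm, ← hβ, sq]
  obtain ⟨b, hb, hb1⟩ := hle (Submodule.one_le.mp hM.ge : (1 : K) ∈ M * (1 / M))
  rw [FaithfulSMul.algebraMap_injective B K (hb1.trans (map_one _).symm)] at hb
  exact (Ideal.eq_top_iff_one J).mpr hb

end ReesEmbedding

theorem isIso_morphismRestrict_of_isOpenImmersion {X Y Z : Scheme.{u}} (F : X ⟶ Y) (U : Y.Opens)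
    (j : Z ⟶ X) [IsOpenImmersion j] [IsOpenImmersion (j ≫ F)] (hj : j.opensRange = F ⁻¹ᵁ U)
    (hjF : (j ≫ F).opensRange = U) : IsIso (F ∣_ U) := by
  let e := IsOpenImmersion.isoOfRangeEq j (F ⁻¹ᵁ U).ι (by rw [Scheme.Opens.range_ι, ← hj]; rfl)
  let e' := IsOpenImmersion.isoOfRangeEq (j ≫ F) U.ι (by
    rw [Scheme.Opens.range_ι, ← hjF]; rfl)
  have hF : F ∣_ U = e.inv ≫ e'.hom := by
    rw [Iso.eq_inv_comp, ← cancel_mono U.ι, Category.assoc, morphismRestrict_ι,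
      IsOpenImmersion.isoOfRangeEq_hom_fac, IsOpenImmersion.isoOfRangeEq_hom_fac_assoc]
  rw [hF]
  infer_instance

namespace IsReesEmbedding

open HomogeneousLocalization

variable {σ : Type*} {S B : Type u} {K : Type*} [CommRing S] [CommRing K] [CommRing B] [Algebra B K]
  [SetLike σ S] [AddSubgroupClass σ S] {𝒜 : ℕ → σ} [GradedRing 𝒜] {ρ : S →+* K}
  {M : Submodule B K}

/-- The morphism `Proj 𝒜 ⟶ Spec B` glued from the `B`-algebra structures `toAway` of the charts. -/
noncomputable def toSpec (h : IsReesEmbedding 𝒜 ρ M) : Proj 𝒜 ⟶ Spec (.of B) :=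
  (Proj.affineOpenCover 𝒜).openCover.glueMorphisms
    (fun f ↦ Spec.map (CommRingCat.ofHom (h.toAway f.1.pos f.2.2))) <| by
  intro ⟨d, f⟩ ⟨e, g⟩
  change Limits.pullback.fst (Proj.awayι 𝒜 f.1 f.2 d.pos) (Proj.awayι 𝒜 g.1 g.2 e.pos) ≫
      Spec.map (CommRingCat.ofHom (h.toAway d.pos f.2)) =
    Limits.pullback.snd (Proj.awayι 𝒜 f.1 f.2 d.pos) (Proj.awayι 𝒜 g.1 g.2 e.pos) ≫
      Spec.map (CommRingCat.ofHom (h.toAway e.pos g.2))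
  have hfg : f.1 * g.1 ∈ 𝒜 (d + e) := SetLike.mul_mem_graded f.2 g.2
  rw [← Proj.pullbackAwayιIso_hom_SpecMap_awayMap_left 𝒜 f.2 d.pos g.2 e.pos rfl,
    ← Proj.pullbackAwayιIso_hom_SpecMap_awayMap_right 𝒜 f.2 d.pos g.2 e.pos rfl,
    Category.assoc, Category.assoc, ← Spec.map_comp, ← Spec.map_comp,
    ← CommRingCat.ofHom_comp, ← CommRingCat.ofHom_comp,
    h.awayMap_comp_toAway d.pos f.2 (Nat.add_pos_left d.pos e) hfg g.2 rfl,
    h.awayMap_comp_toAway e.pos g.2 (Nat.add_pos_left d.pos e) hfg f.2 (mul_comm _ _)]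

theorem awayι_toSpec (h : IsReesEmbedding 𝒜 ρ M) {f : S} {d : ℕ} (hd : 0 < d) (hf : f ∈ 𝒜 d) :
    Proj.awayι 𝒜 f hf hd ≫ h.toSpec = Spec.map (CommRingCat.ofHom (h.toAway hd hf)) :=
  Scheme.Cover.ι_glueMorphisms (Proj.affineOpenCover 𝒜).openCover _ _ ⟨⟨d, hd⟩, ⟨f, hf⟩⟩

theorem toSpec_preimage_basicOpen (h : IsReesEmbedding 𝒜 ρ M) {β : B} {g : S}
    (hβ : IsReesChart 𝒜 ρ M β g) :
    h.toSpec ⁻¹ᵁ PrimeSpectrum.basicOpen β = Proj.basicOpen 𝒜 g := by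
  have hpre {f : S} {d : ℕ} (hd : 0 < d) (hf : f ∈ 𝒜 d) (V : (Spec (.of B)).Opens) :
      Proj.awayι 𝒜 f hf hd ⁻¹ᵁ h.toSpec ⁻¹ᵁ V =
        Spec.map (CommRingCat.ofHom (h.toAway hd hf)) ⁻¹ᵁ V := by
    rw [← Scheme.Hom.comp_preimage, h.awayι_toSpec]
  have hchart {f : S} {d : ℕ} (hd : 0 < d) (hf : f ∈ 𝒜 d) :
      Proj.awayι 𝒜 f hf hd ⁻¹ᵁ h.toSpec ⁻¹ᵁ PrimeSpectrum.basicOpen β =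
        Proj.awayι 𝒜 f hf hd ⁻¹ᵁ Proj.basicOpen 𝒜 g := by
    rw [Proj.awayι_preimage_basicOpen 𝒜 hf hd hβ.mem one_pos, ← hβ.basicOpen_toAway h hd hf]
    exact hpre hd hf _
  ext x
  obtain ⟨⟨d, f⟩, y, rfl⟩ := (Proj.affineOpenCover 𝒜).openCover.exists_eq x
  exact Iff.of_eq (congrArg (y ∈ ·) (hchart d.pos f.2))

theorem isIso_toSpec_morphismRestrict [FaithfulSMul B K] (h : IsReesEmbedding 𝒜 ρ M) {β : B}
    {g : S} (hβ : IsReesChart 𝒜 ρ M β g) :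
    IsIso (h.toSpec ∣_ PrimeSpectrum.basicOpen β) := by
  algebraize [h.toAway one_pos hβ.mem]
  have : IsLocalization.Away β (Away 𝒜 g) := hβ.isLocalizationAway h
  have himm : IsOpenImmersion (Spec.map (CommRingCat.ofHom (h.toAway one_pos hβ.mem))) :=
    IsOpenImmersion.of_isLocalization (S := Away 𝒜 g) β
  have hι := h.awayι_toSpec one_pos hβ.mem
  have : IsOpenImmersion (Proj.awayι 𝒜 g hβ.mem one_pos ≫ h.toSpec) := hι ▸ himm
  refine isIso_morphismRestrict_of_isOpenImmersion h.toSpec _ (Proj.awayι 𝒜 g hβ.mem one_pos) ?_ ?_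
  · rw [Proj.opensRange_awayι, h.toSpec_preimage_basicOpen hβ]
  · simp only [hι]
    exact TopologicalSpace.Opens.ext (PrimeSpectrum.localization_away_comap_range (Away 𝒜 g) β)

theorem isIso_toSpec [FaithfulSMul B K] (h : IsReesEmbedding 𝒜 ρ M) (hM : M * (1 / M) = 1) :
    IsIso h.toSpec := by
  let T := {β : B | ∃ g, IsReesChart 𝒜 ρ M β g}
  have hT : ⨆ β : T, PrimeSpectrum.basicOpen β.1 = ⊤ := by
    rw [PrimeSpectrum.iSup_basicOpen_eq_top_iff, Subtype.range_coe]
    exact h.span_isReesChart_eq_top hM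
  exact IsZariskiLocalAtTarget.of_iSup_eq_top (P := MorphismProperty.isomorphisms Scheme) _ hT
    fun ⟨_, _, hβ⟩ ↦ h.isIso_toSpec_morphismRestrict hβ

theorem toSpec_SpecMap_algebraMap {A : Type u} [CommRing A] [Algebra A B] [Algebra A K]
    [IsScalarTower A B K] [Algebra A S] {𝒜 : ℕ → Submodule A S} [GradedAlgebra 𝒜]
    {ρ : S →ₐ[A] K} (h : IsReesEmbedding 𝒜 (ρ : S →+* K) M) :
    h.toSpec ≫ Spec.map (CommRingCat.ofHom (algebraMap A B)) =
      Proj.toSpecZero 𝒜 ≫ Spec.map (CommRingCat.ofHom (algebraMap A (𝒜 0))) := by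
  refine Scheme.Cover.hom_ext (Proj.affineOpenCover 𝒜).openCover _ _ fun ⟨d, f⟩ ↦ ?_
  change Proj.awayι 𝒜 f.1 f.2 d.pos ≫ _ = Proj.awayι 𝒜 f.1 f.2 d.pos ≫ _
  rw [← Category.assoc, h.awayι_toSpec, Proj.awayι_toSpecZero_assoc, ← Spec.map_comp,
    ← Spec.map_comp, ← CommRingCat.ofHom_comp, ← CommRingCat.ofHom_comp]
  congr 2
  refine RingHom.ext fun a ↦ h.toAway_eq_fromZeroRingHom d.pos f.2 ?_
  exact (ρ.commutes a).trans (IsScalarTower.algebraMap_apply A B K a)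

end IsReesEmbedding

section ReesAlgebra

variable {A S : Type*} (K : Type*) [CommRing A] [CommRing S] [CommRing K] [Algebra A S]
  [Algebra A K] {I : Ideal A}

/-- Evaluation at `X = 1` of the polynomials in a model `S` of the Rees algebra of `I`: its
restriction to degree `n` is the embedding of `I ^ n` into `K`. -/
noncomputable def reesEval (ψ : S ≃ₐ[A] reesAlgebra I) : S →ₐ[A] K :=
  (aeval 1).comp ((reesAlgebra I).val.comp ψ)

variable {K}

theorem reesEval_of_eq_monomial {ψ : S ≃ₐ[A] reesAlgebra I} {x : S} {n : ℕ} {a : A}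
    (hx : (ψ x : A[X]) = monomial n a) : reesEval K ψ x = algebraMap A K a := by
  change aeval 1 (ψ x : A[X]) = _
  rw [hx, aeval_monomial, one_pow, mul_one]

theorem isReesEmbedding_reesEval {B : Type*} [CommRing B] [Algebra A B] [Algebra B K]
    [IsScalarTower A B K] [FaithfulSMul A K] {𝒜 : ℕ → Submodule A S}
    {ψ : S ≃ₐ[A] reesAlgebra I} (hψ : ∀ n x, x ∈ 𝒜 n ↔ ∀ m, m ≠ n → (ψ x : A[X]).coeff m = 0)
    {M : Submodule B K} (hM : M.restrictScalars A = IsLocalization.coeSubmodule K I) :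
    IsReesEmbedding 𝒜 (reesEval K ψ : S →+* K) M := by
  have hmonomial {n : ℕ} {x : S} (hx : x ∈ 𝒜 n) : ∃ a ∈ I ^ n, (ψ x : A[X]) = monomial n a := by
    refine ⟨_, (ψ x).2 n, Polynomial.ext fun m ↦ ?_⟩
    rw [coeff_monomial]
    split_ifs with hnm
    · rw [hnm]
    · exact (hψ n x).mp hx m (Ne.symm hnm)
  have hpow {n : ℕ} (hn : n ≠ 0) :
      (M ^ n).restrictScalars A = IsLocalization.coeSubmodule K (I ^ n) := by
    rw [Submodule.restrictScalars_pow hn, hM]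
    exact (Submodule.map_pow I (Algebra.ofId A K) n).symm
  refine ⟨fun n x hx y hy hxy ↦ ?_, fun n x hx ↦ ?_, fun n hn k hk ↦ ?_⟩
  · obtain ⟨a, -, ha⟩ := hmonomial hx
    obtain ⟨b, -, hb⟩ := hmonomial hy
    have hab : algebraMap A K a = algebraMap A K b :=
      (reesEval_of_eq_monomial ha).symm.trans (hxy.trans (reesEval_of_eq_monomial hb))
    rw [FaithfulSMul.algebraMap_injective A K hab, ← hb] at ha
    exact ψ.injective (Subtype.ext ha)
  · obtain ⟨a, haI, ha⟩ := hmonomial hx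
    change reesEval K ψ x ∈ M ^ n
    rw [reesEval_of_eq_monomial ha]
    rcases eq_or_ne n 0 with rfl | hn
    · rw [pow_zero, IsScalarTower.algebraMap_apply A B K]
      exact Submodule.algebraMap_mem _
    · exact (hpow hn).ge ⟨a, haI, rfl⟩
  · obtain ⟨a, haI, rfl⟩ := (hpow hn).le hk
    have hmem : monomial n a ∈ reesAlgebra I := reesAlgebra.monomial_mem.mpr haI
    have hx : (ψ (ψ.symm ⟨_, hmem⟩) : A[X]) = monomial n a := by rw [AlgEquiv.apply_symm_apply]
    refine ⟨ψ.symm ⟨_, hmem⟩, (hψ n _).mpr fun m hm ↦ ?_, reesEval_of_eq_monomial hx⟩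
    rw [hx, coeff_monomial_of_ne a hm]

end ReesAlgebra

theorem stmt_14_general (A : Type u) [CommRing A] [IsNoetherianRing A] [Ring.KrullDimLE 1 A]
    {K : Type u} [CommRing K] [Algebra A K] [IsFractionRing A K]
    [Module.Finite A (integralClosure A K)] {S : Type u} [CommRing S] [Algebra A S]
    (𝒜 : ℕ → Submodule A S) [GradedAlgebra 𝒜]
    (ψ : S ≃ₐ[A] reesAlgebra (conductorIdeal A K (integralClosure A K)))
    (hψ : ∀ n x, x ∈ 𝒜 n ↔ ∀ m, m ≠ n → (ψ x : A[X]).coeff m = 0) :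
    ∃ e : Proj 𝒜 ≅ Spec (CommRingCat.of (integralClosure A K)),
      e.hom ≫ Spec.map (CommRingCat.ofHom (algebraMap A (integralClosure A K))) =
        Proj.toSpecZero 𝒜 ≫ Spec.map (CommRingCat.ofHom (algebraMap A (𝒜 0))) := by
  have := (faithfulSMul_iff_algebraMap_injective A K).mpr (IsFractionRing.injective A K)
  have : IsNoetherianRing (integralClosure A K) := isNoetherian_of_tower A inferInstance
  have : Ring.KrullDimLE 1 (integralClosure A K) := krullDimLE_of_isIntegral A 1
  obtain ⟨a, haC, ha⟩ :=
    exists_mem_conductorIdeal_mem_nonZeroDivisors (integralClosure A K)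
  have h := isReesEmbedding_reesEval hψ (restrictScalars_conductorSubmodule (integralClosure A K))
  have hM := mul_one_div_eq_one_of_le_one (conductorSubmodule_le_one (integralClosure A K))
    (IsLocalization.map_units K ⟨a, ha⟩) ⟨a, haC, rfl⟩
  have := h.isIso_toSpec hM
  exact ⟨asIso h.toSpec, h.toSpec_SpecMap_algebraMap⟩

/-- Let `A` be a reduced Noetherian commutative ring of Krull dimension one
whose integral closure `B` in `Q(A)` is a finite `A`-module.  Then the blow up of `Spec A`
in the conductor ideal `C = A :_{Q(A)} B` coincides with the normalization `Spec B`: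
`Proj_A (⊕_{i≥0} C^i) ≅ Spec B` over `Spec A`.  The blow up is rendered as `Proj 𝒜` for any
realization `(S, 𝒜)` of the Rees algebra `⊕_{i≥0} C^i` as a graded `A`-algebra, and the
isomorphism is compatible with the structure morphisms to `Spec A`. -/
theorem stmt_14 (A : Type u) [CommRing A] [IsNoetherianRing A] [IsReduced A]
    (hdim : ringKrullDim A = 1)
    [Module.Finite A (integralClosure A (FractionRing A))] :
    ∀ (S : Type u) [CommRing S] [Algebra A S]
      (𝒜 : ℕ → Submodule A S) [GradedAlgebra 𝒜]
      (ψ : S ≃ₐ[A] reesAlgebra (conductorIdeal A (FractionRing A)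
        (integralClosure A (FractionRing A))))
      (_ : ∀ (n : ℕ) (x : S), x ∈ 𝒜 n ↔
        ∀ m, m ≠ n → ((ψ x : Polynomial A).coeff m = 0)),
      ∃ e : Proj 𝒜 ≅ Spec (CommRingCat.of (integralClosure A (FractionRing A))),
        e.hom ≫ Spec.map (CommRingCat.ofHom
            (algebraMap A (integralClosure A (FractionRing A))))
          = Proj.toSpecZero 𝒜 ≫ Spec.map (CommRingCat.ofHom (algebraMap A (𝒜 0))) := by
  have : Ring.KrullDimLE 1 A := Ring.krullDimLE_iff.mpr hdim.le
  exact fun _ _ _ 𝒜 _ ψ hψ ↦ stmt_14_general A 𝒜 ψ hψ
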